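/- arXiv:2602.05304 — 2 statements merged into one kernel-verified Lean document; each statement's English description precedes it below -/
import Mathlib

section
/- (IAG, strongly convex case.) Fix integers τ ≥ 1 and K > τ, and set α = 1/(16 L τ). Suppose the (deterministic) sampling sequence has staleness bounded by τ up to horizon K, and that f is μ-strongly convex (μ > 0) with minimizer x* and κ := L/μ. Then the IAG iterates (i.e., the iterates driven by the SAG direction) satisfy f(x_K) − f(x*) ≤ 6 L B² · (1 − 1/(64 τ κ))^K. -/
open scoped RealInnerProductSpace

theorem aux_lyap (F G : ℕ → ℝ) (τ : ℕ) (hτ : 1 ≤ τ) (c q r : ℝ) (hc : 0 ≤ c)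
    (hrq : r ≤ q) (hr4 : r ≤ 1 / (4 * τ)) (hr1 : r ≤ 1)
    (hF : ∀ n, 0 ≤ F n) (hG : ∀ n, 0 ≤ G n) (M : ℕ)
    (hstep : ∀ n, n < M → F (n + 1) ≤ (1 - q) * F n - c * (15 / 16) * G (n + τ)
      + c / (256 * τ) * ∑ s ∈ Finset.range τ, G (n + s)) :
    F M ≤ (1 - r) ^ M * (F 0 + c / (128 * τ) *
      ∑ s ∈ Finset.range τ, ((τ : ℝ) + s + 1) * G s) := by
  have hτ0 : (0 : ℝ) < τ := by exact_mod_cast hτ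
  let W : ℕ → ℝ := fun n => ∑ s ∈ Finset.range τ, ((τ : ℝ) + s + 1) * G (n + s)
  let S : ℕ → ℝ := fun n => ∑ s ∈ Finset.range τ, G (n + s)
  have hW0 : ∀ n, 0 ≤ W n := fun n =>
    Finset.sum_nonneg fun s _ => mul_nonneg (by positivity) (hG _)
  have hWS : ∀ n, W n ≤ 2 * τ * S n := by
    intro n
    simp only [W, S]
    rw [Finset.mul_sum]
    refine Finset.sum_le_sum fun s hs => ?_
    have : (s : ℝ) + 1 ≤ τ := by exact_mod_cast Finset.mem_range.1 hs
    exact mul_le_mul_of_nonneg_right (by linarith) (hG _)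
  have hWrec : ∀ n, W (n + 1) ≤ 2 * τ * G (n + τ) + W n - S n := by
    intro n
    have e1 : W n - S n = ∑ s ∈ Finset.range τ, ((τ : ℝ) + s) * G (n + s) := by
      simp only [W, S]
      rw [← Finset.sum_sub_distrib]
      exact Finset.sum_congr rfl fun s _ => by ring
    have e2 : W (n + 1) = ∑ s ∈ Finset.range τ, ((τ : ℝ) + (s + 1 : ℕ)) * G (n + (s + 1)) := by
      simp only [W]
      refine Finset.sum_congr rfl fun s _ => ?_
      rw [show n + 1 + s = n + (s + 1) by ring]
      push_cast; ring
    have e3 := Finset.sum_range_succ' (fun s : ℕ => ((τ : ℝ) + s) * G (n + s)) τ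
    have e4 := Finset.sum_range_succ (fun s : ℕ => ((τ : ℝ) + s) * G (n + s)) τ
    rw [← e2] at e3
    rw [← e1] at e4
    have : 0 ≤ ((τ : ℝ) + (0 : ℕ)) * G (n + 0) := mul_nonneg (by positivity) (hG _)
    linarith
  have key : ∀ n, n ≤ M → F n + c / (128 * τ) * W n ≤ (1 - r) ^ n * (F 0 + c / (128 * τ) * W 0) := by
    intro n
    induction n with
    | zero => intro _; simp
    | succ n ih =>
      intro hn
      have ih := ih (by omega)
      have hs := hstep n (by omega)
      change F (n + 1) ≤ (1 - q) * F n - c * (15 / 16) * G (n + τ) + c / (256 * τ) * S n at hs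
      have hb : 0 ≤ c / (128 * τ) := by positivity
      set b := c / (128 * τ) with hbd
      have h1 : c / (256 * τ) = b / 2 := by rw [hbd]; field_simp <;> ring
      have h2 : b * (2 * τ) = c / 64 := by rw [hbd]; field_simp <;> ring
      have h3 := mul_le_mul_of_nonneg_left (hWrec n) hb
      have h4 : r * W n ≤ S n / 2 := by
        calc r * W n ≤ 1 / (4 * τ) * (2 * τ * S n) :=
              mul_le_mul hr4 (hWS n) (hW0 n) (by positivity)
          _ = S n / 2 := by field_simp <;> ring
      have h5 := mul_le_mul_of_nonneg_left h4 hb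
      have h6 := mul_le_mul_of_nonneg_right hrq (hF n)
      have h7 := mul_nonneg hc (hG (n + τ))
      have h8 := mul_le_mul_of_nonneg_left ih (sub_nonneg.2 hr1)
      have h9 : b * (2 * τ * G (n + τ)) = c / 64 * G (n + τ) := by rw [← h2]; ring
      rw [h1] at hs
      rw [pow_succ]
      nlinarith
  have h1 := key M le_rfl
  have h2 : 0 ≤ c / (128 * τ) * W M := mul_nonneg (by positivity) (hW0 _)
  have h3 : W 0 = ∑ s ∈ Finset.range τ, ((τ : ℝ) + s + 1) * G s := by simp [W]
  rw [h3] at h1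
  linarith

theorem aux_descent {E : Type*} [NormedAddCommGroup E] [InnerProductSpace ℝ E] [CompleteSpace E]
    (f : E → ℝ) (L : ℝ) (hd : Differentiable ℝ f)
    (hs : ∀ x y, ‖gradient f x - gradient f y‖ ≤ L * ‖x - y‖) (x v : E) :
    f (x + v) ≤ f x + ⟪gradient f x, v⟫ + L / 2 * ‖v‖ ^ 2 := by
  have hderiv : ∀ t : ℝ, HasDerivAt (fun t : ℝ => f (x + t • v)) ⟪gradient f (x + t • v), v⟫ t := by
    intro t
    have h1 : HasDerivAt (fun t : ℝ => x + t • v) v t := by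
      simpa using ((hasDerivAt_id t).smul_const v).const_add x
    have h2 := (hd (x + t • v)).hasFDerivAt.comp_hasDerivAt t h1
    rw [inner_gradient_left]
    exact h2
  have hderB : ∀ t : ℝ, HasDerivAt (fun t : ℝ => f x + t * ⟪gradient f x, v⟫ + L / 2 * ‖v‖ ^ 2 * t ^ 2)
      (⟪gradient f x, v⟫ + L * ‖v‖ ^ 2 * t) t := by
    intro t
    have h := (((hasDerivAt_id t).mul_const ⟪gradient f x, v⟫).const_add (f x)).add
      ((hasDerivAt_pow 2 t).const_mul (L / 2 * ‖v‖ ^ 2))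
    refine h.congr_deriv ?_
    simp; ring
  have := image_le_of_deriv_right_le_deriv_boundary (f := fun t : ℝ => f (x + t • v))
    (f' := fun t => ⟪gradient f (x + t • v), v⟫) (a := 0) (b := 1)
    (B := fun t : ℝ => f x + t * ⟪gradient f x, v⟫ + L / 2 * ‖v‖ ^ 2 * t ^ 2)
    (B' := fun t => ⟪gradient f x, v⟫ + L * ‖v‖ ^ 2 * t)
    (fun t _ => (hderiv t).continuousAt.continuousWithinAt)
    (fun t _ => (hderiv t).hasDerivWithinAt) (by simp)
    (fun t _ => (hderB t).continuousAt.continuousWithinAt)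
    (fun t _ => (hderB t).hasDerivWithinAt)
    (fun t ht => by
      have h1 : ⟪gradient f (x + t • v) - gradient f x, v⟫ ≤ L * ‖v‖ ^ 2 * t := by
        refine (real_inner_le_norm _ _).trans ?_
        have h2 := hs (x + t • v) x
        rw [add_sub_cancel_left, norm_smul, Real.norm_of_nonneg ht.1] at h2
        calc _ ≤ (L * (t * ‖v‖)) * ‖v‖ := mul_le_mul_of_nonneg_right h2 (norm_nonneg _)
          _ = _ := by ring
      rw [inner_sub_left] at h1
      linarith)
    (x := 1) (by simp)
  simpa using this

theorem aux_grad_min {E : Type*} [NormedAddCommGroup E] [InnerProductSpace ℝ E] [CompleteSpace E]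
    (f : E → ℝ) (x : E) (hm : ∀ y, f x ≤ f y) : gradient f x = 0 := by
  have : IsLocalMin f x := Filter.Eventually.of_forall hm
  simp [gradient, this.fderiv_eq_zero]

theorem aux_avg {E : Type*} [NormedAddCommGroup E] [NormedSpace ℝ E] (N : ℕ) (hN : 1 ≤ N)
    (v : Fin N → E) (C : ℝ) (h : ∀ i, ‖v i‖ ≤ C) : ‖(N : ℝ)⁻¹ • ∑ i, v i‖ ≤ C := by
  have hN0 : (0 : ℝ) < N := by exact_mod_cast hN
  rw [norm_smul, Real.norm_of_nonneg (by positivity)]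
  have h1 : ‖∑ i, v i‖ ≤ N * C := by
    refine (norm_sum_le _ _).trans ((Finset.sum_le_sum fun i _ => h i).trans ?_)
    simp
  calc _ ≤ (N : ℝ)⁻¹ * (N * C) := by gcongr
    _ = C := by field_simp

set_option maxHeartbeats 2000000 in
theorem iag_strongly_convex (d N : ℕ) (hd : 1 ≤ d) (hN : 1 ≤ N)
    (L μ : ℝ) (hL : 0 < L) (hμ : 0 < μ)
    (fi : Fin N → EuclideanSpace ℝ (Fin d) → ℝ)
    (hdiff : ∀ i, Differentiable ℝ (fi i))
    (hsmooth : ∀ i x y, ‖gradient (fi i) x - gradient (fi i) y‖ ≤ L * ‖x - y‖)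
    (f : EuclideanSpace ℝ (Fin d) → ℝ)
    (hf : ∀ z, f z = (∑ i, fi i z) / N)
    (hsc : ∀ y z, f y + ⟪gradient f y, z - y⟫ + μ / 2 * ‖z - y‖ ^ 2 ≤ f z)
    (xstar : EuclideanSpace ℝ (Fin d)) (hmin : ∀ y, f xstar ≤ f y)
    (xistar : Fin N → EuclideanSpace ℝ (Fin d))
    (hxi : ∀ i y, fi i (xistar i) ≤ fi i y)
    (B : ℝ) (hB : B = max ‖xstar‖ (⨆ i, ‖xistar i‖))
    (κ : ℝ) (hκ : κ = L / μ)
    (τ K : ℕ) (hτ : 1 ≤ τ) (hK : τ < K)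
    (idx : ℕ → Fin N) (α : ℝ) (hα : α = 1 / (16 * L * τ))
    (x g : ℕ → EuclideanSpace ℝ (Fin d))
    (h : Fin N → ℕ → EuclideanSpace ℝ (Fin d))
    (hx0 : x 0 = 0)
    (hh0 : ∀ i, h i 0 = 0)
    (hhrec : ∀ i k, h i (k + 1) = if idx k = i then gradient (fi i) (x k) else h i k)
    (hg : ∀ k, g k = (N : ℝ)⁻¹ • (∑ i, h i k)
      + (N : ℝ)⁻¹ • (gradient (fi (idx k)) (x k) - h (idx k) k))
    (hxrec : ∀ k, x (k + 1) = x k - α • g k)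
    (hstale : ∀ i : Fin N, ∀ k : ℕ, τ ≤ k → k ≤ K - 1 →
      ∃ j : ℕ, k - τ ≤ j ∧ j < k ∧ idx j = i) :
    f (x K) - f xstar ≤ 6 * L * B ^ 2 * (1 - 1 / (64 * (τ : ℝ) * κ)) ^ K := by
  have hN0 : (0 : ℝ) < N := by exact_mod_cast hN
  have hτ0 : (0 : ℝ) < τ := by exact_mod_cast hτ
  have hτ1 : (1 : ℝ) ≤ τ := by exact_mod_cast hτ
  have hα0 : 0 < α := by rw [hα]; positivity
  have hαL : α * L * τ = 1 / 16 := by rw [hα]; field_simp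
  have hBx : ‖xstar‖ ≤ B := by rw [hB]; exact le_max_left _ _
  have hBi : ∀ i, ‖xistar i‖ ≤ B := by
    intro i
    rw [hB]
    exact (le_ciSup (f := fun i => ‖xistar i‖) (Set.finite_range _).bddAbove i).trans
      (le_max_right _ _)
  have hB0 : 0 ≤ B := (norm_nonneg _).trans hBx
  -- gradient of the average
  have hgr : ∀ z, HasGradientAt f ((N : ℝ)⁻¹ • ∑ i, gradient (fi i) z) z := by
    intro z
    have hf' : f = fun z => (N : ℝ)⁻¹ * ∑ i, fi i z := by
      funext z; rw [hf]; field_simp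
    have h1 : HasFDerivAt (fun z => (N : ℝ)⁻¹ * ∑ i, fi i z)
        ((N : ℝ)⁻¹ • ∑ i, fderiv ℝ (fi i) z) z :=
      (HasFDerivAt.fun_sum fun i _ => (hdiff i z).hasFDerivAt).const_mul _
    rw [hf', hasGradientAt_iff_hasFDerivAt]
    refine h1.congr_fderiv ?_
    rw [map_smul, map_sum]
    simp
  have hgrad : ∀ z, gradient f z = (N : ℝ)⁻¹ • ∑ i, gradient (fi i) z := fun z => (hgr z).gradient
  have hfd : Differentiable ℝ f := fun z => (hgr z).differentiableAt
  have hfs : ∀ y z, ‖gradient f y - gradient f z‖ ≤ L * ‖y - z‖ := by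
    intro y z
    rw [hgrad, hgrad, ← smul_sub, ← Finset.sum_sub_distrib]
    exact aux_avg N hN _ _ fun i => hsmooth i y z
  have hgs : gradient f xstar = 0 := aux_grad_min f xstar hmin
  have hgi : ∀ i, gradient (fi i) (xistar i) = 0 := fun i => aux_grad_min _ _ (hxi i)
  -- μ ≤ L
  have hμL : μ ≤ L := by
    have : Nonempty (Fin d) := ⟨⟨0, hd⟩⟩
    obtain ⟨v, hv⟩ := exists_ne (0 : EuclideanSpace ℝ (Fin d))
    have hv0 : 0 < ‖v‖ := norm_pos_iff.2 hv
    have h1 := hsc xstar (xstar + v)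
    have h2 := aux_descent f L hfd hfs xstar v
    rw [add_sub_cancel_left] at h1
    have h3 : 0 < ‖v‖ ^ 2 := by positivity
    nlinarith
  have hκ1 : 1 ≤ κ := by rw [hκ, le_div_iff₀ hμ]; linarith
  have hκ0 : 0 < κ := by linarith
  -- PL
  have hPL : ∀ y, 2 * μ * (f y - f xstar) ≤ ‖gradient f y‖ ^ 2 := by
    intro y
    have h1 := hsc y xstar
    have h2 := norm_add_sq_real (gradient f y) (μ • (xstar - y))
    rw [inner_smul_right, norm_smul, Real.norm_of_nonneg hμ.le, mul_pow] at h2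
    nlinarith [sq_nonneg ‖gradient f y + μ • (xstar - y)‖]
  -- rewrite of g
  have hg' : ∀ k, g k = (N : ℝ)⁻¹ • ∑ i, h i (k + 1) := by
    intro k
    rw [hg, ← smul_add]
    congr 1
    have : ∀ i, h i (k + 1) = h i k + if idx k = i then gradient (fi i) (x k) - h i k else 0 := by
      intro i
      rw [hhrec]
      split_ifs <;> simp
    simp_rw [this]
    rw [Finset.sum_add_distrib, Finset.sum_ite_eq]
    simp
  -- initial phase
  have hform : ∀ i k, h i k = 0 ∨ ∃ j, j < k ∧ h i k = gradient (fi i) (x j) := by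
    intro i k
    induction k with
    | zero => left; exact hh0 i
    | succ k ih =>
      rw [hhrec]
      split_ifs with hi
      · right; exact ⟨k, by omega, rfl⟩
      · rcases ih with ih | ⟨j, hj, ih⟩
        · left; exact ih
        · right; exact ⟨j, by omega, ih⟩
  set p : ℝ := 1 + α * L with hp
  have hp1 : 1 ≤ p := by rw [hp]; have := mul_pos hα0 hL; linarith
  have hgrow : ∀ k, ∀ j, j ≤ k → ‖x j‖ + B ≤ B * p ^ k := by
    have hgb : ∀ k, (∀ j, j ≤ k → ‖x j‖ + B ≤ B * p ^ k) → ‖g k‖ ≤ L * (B * p ^ k) := by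
      intro k hk
      rw [hg']
      refine aux_avg N hN _ _ fun i => ?_
      rcases hform i (k + 1) with h0 | ⟨j, hj, h0⟩
      · rw [h0, norm_zero]; positivity
      · rw [h0]
        have h1 := hsmooth i (x j) (xistar i)
        rw [hgi, sub_zero] at h1
        refine h1.trans (mul_le_mul_of_nonneg_left ?_ hL.le)
        exact ((norm_sub_le _ _).trans (by linarith [hBi i])).trans (hk j (by omega))
    intro k
    induction k with
    | zero => intro j hj; obtain rfl : j = 0 := by omega
              simp [hx0]
    | succ k ih =>
      intro j hj
      have hpk : B * p ^ (k + 1) = B * p ^ k + α * (L * (B * p ^ k)) := by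
        rw [pow_succ, hp]; ring
      rcases Nat.lt_or_ge k j with hlt | hle
      · obtain rfl : j = k + 1 := by omega
        rw [hxrec, hpk]
        have h1 := norm_sub_le (x k) (α • g k)
        rw [norm_smul, Real.norm_of_nonneg hα0.le] at h1
        have h2 := mul_le_mul_of_nonneg_left (hgb k ih) hα0.le
        linarith [ih k le_rfl]
      · have := ih j hle
        rw [hpk]
        have : 0 ≤ α * (L * (B * p ^ k)) := by positivity
        linarith
  have hgb : ∀ k, ‖g k‖ ≤ L * (B * p ^ k) := by
    intro k
    rw [hg']
    refine aux_avg N hN _ _ fun i => ?_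
    rcases hform i (k + 1) with h0 | ⟨j, hj, h0⟩
    · rw [h0, norm_zero]; positivity
    · rw [h0]
      have h1 := hsmooth i (x j) (xistar i)
      rw [hgi, sub_zero] at h1
      refine h1.trans (mul_le_mul_of_nonneg_left ?_ hL.le)
      exact ((norm_sub_le _ _).trans (by linarith [hBi i])).trans (hgrow k j (by omega))
  have hpτ : p ^ τ ≤ 2 := by
    have h1 : p ≤ Real.exp (α * L) := by rw [hp]; linarith [Real.add_one_le_exp (α * L)]
    have h2 : p ^ τ ≤ Real.exp (1 / 16) := by
      calc p ^ τ ≤ Real.exp (α * L) ^ τ := by gcongr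
        _ = Real.exp (1 / 16) := by rw [← Real.exp_nat_mul, ← hαL]; congr 1; ring
    have h3 := Real.add_one_le_exp (-(1 / 16) : ℝ)
    have h4 : Real.exp (1 / 16) * Real.exp (-(1 / 16)) = 1 := by rw [← Real.exp_add]; simp
    nlinarith [Real.exp_pos (1 / 16)]
  have hFτ : f (x τ) - f xstar ≤ 2 * L * B ^ 2 := by
    have h1 := aux_descent f L hfd hfs xstar (x τ - xstar)
    rw [hgs, inner_zero_left, add_sub_cancel] at h1
    have h2 : ‖x τ - xstar‖ ≤ 2 * B := by
      have := hgrow τ τ le_rfl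
      have := norm_sub_le (x τ) xstar
      nlinarith
    have h3 : ‖x τ - xstar‖ ^ 2 ≤ (2 * B) ^ 2 := by gcongr
    nlinarith
  have hGτ : ∀ k, k < τ → ‖g k‖ ^ 2 ≤ 4 * L ^ 2 * B ^ 2 := by
    intro k hk
    have h1 : p ^ k ≤ 2 := (pow_le_pow_right₀ hp1 hk.le).trans hpτ
    have h2 : ‖g k‖ ≤ L * (B * 2) := (hgb k).trans (by gcongr)
    calc ‖g k‖ ^ 2 ≤ (L * (B * 2)) ^ 2 := by gcongr
      _ = _ := by ring
  -- staleness
  have hst : ∀ i j k, j < k → idx j = i → ∃ m, j ≤ m ∧ m < k ∧ h i k = gradient (fi i) (x m) := by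
    intro i j k hjk hj
    induction k with
    | zero => omega
    | succ k ih =>
      rw [hhrec]
      split_ifs with hi
      · exact ⟨k, by omega, by omega, rfl⟩
      · have hne : j ≠ k := by rintro rfl; exact hi hj
        obtain ⟨m, h1, h2, h3⟩ := ih (by omega)
        exact ⟨m, h1, by omega, h3⟩
  have herr : ∀ n, n + τ < K → ‖gradient f (x (n + τ)) - g (n + τ)‖ ^ 2
      ≤ 1 / (256 * τ) * ∑ s ∈ Finset.range τ, ‖g (n + s)‖ ^ 2 := by
    intro n hn
    have h1 : ‖gradient f (x (n + τ)) - g (n + τ)‖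
        ≤ L * (α * ∑ s ∈ Finset.range τ, ‖g (n + s)‖) := by
      rw [hgrad, hg', ← smul_sub, ← Finset.sum_sub_distrib]
      refine aux_avg N hN _ _ fun i => ?_
      obtain ⟨j, hj1, hj2, hj3⟩ := hstale i (n + τ) (by omega) (by omega)
      obtain ⟨m, hm1, hm2, hm3⟩ := hst i j (n + τ + 1) (by omega) hj3
      rw [hm3]
      refine (hsmooth i _ _).trans (mul_le_mul_of_nonneg_left ?_ hL.le)
      rw [← dist_eq_norm, dist_comm]
      refine (dist_le_Ico_sum_of_dist_le (d := fun k => α * ‖g k‖) (by omega) ?_).trans ?_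
      · intro k _ _
        rw [hxrec, dist_eq_norm, sub_sub_cancel, norm_smul, Real.norm_of_nonneg hα0.le]
      · rw [← Finset.mul_sum]
        refine mul_le_mul_of_nonneg_left ?_ hα0.le
        have e : ∑ s ∈ Finset.range τ, ‖g (n + s)‖ = ∑ k ∈ Finset.Ico n (n + τ), ‖g k‖ := by
          rw [Finset.sum_Ico_eq_sum_range, Nat.add_sub_cancel_left]
        rw [e]
        exact Finset.sum_le_sum_of_subset_of_nonneg
          (Finset.Ico_subset_Ico (by omega) le_rfl) fun _ _ _ => norm_nonneg _
    have h2 := sq_sum_le_card_mul_sum_sq (s := Finset.range τ) (f := fun s => ‖g (n + s)‖)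
    rw [Finset.card_range] at h2
    have hLα : L * α = 1 / (16 * τ) := by rw [hα]; field_simp
    calc _ ≤ (L * (α * ∑ s ∈ Finset.range τ, ‖g (n + s)‖)) ^ 2 := by gcongr
      _ = (1 / (16 * τ)) ^ 2 * (∑ s ∈ Finset.range τ, ‖g (n + s)‖) ^ 2 := by rw [← hLα]; ring
      _ ≤ (1 / (16 * τ)) ^ 2 * (τ * ∑ s ∈ Finset.range τ, ‖g (n + s)‖ ^ 2) := by gcongr
      _ = _ := by field_simp <;> ring
  have hstep : ∀ n, n < K - τ → f (x (n + 1 + τ)) - f xstar ≤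
      (1 - α * μ) * (f (x (n + τ)) - f xstar) - α / 2 * (15 / 16) * ‖g (n + τ)‖ ^ 2
      + α / 2 / (256 * τ) * ∑ s ∈ Finset.range τ, ‖g (n + s)‖ ^ 2 := by
    intro n hn
    have h1 := herr n (by omega)
    have h2 := aux_descent f L hfd hfs (x (n + τ)) (-(α • g (n + τ)))
    rw [← sub_eq_add_neg, ← hxrec, inner_neg_right, inner_smul_right, norm_neg, norm_smul,
      Real.norm_of_nonneg hα0.le] at h2
    rw [show n + 1 + τ = n + τ + 1 by ring]
    have h3 := norm_sub_sq_real (gradient f (x (n + τ))) (g (n + τ))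
    have h4 := hPL (x (n + τ))
    have h5 : L * α ≤ 1 / 16 := by nlinarith [mul_pos hα0 hL]
    have h6 := mul_le_mul_of_nonneg_left h1 hα0.le
    have h7 := mul_le_mul_of_nonneg_left h4 hα0.le
    have h8 := mul_le_mul_of_nonneg_right h5 (mul_nonneg hα0.le (sq_nonneg ‖g (n + τ)‖))
    have h9 : α / 2 / (256 * τ) * ∑ s ∈ Finset.range τ, ‖g (n + s)‖ ^ 2
      = α * (1 / (256 * τ) * ∑ s ∈ Finset.range τ, ‖g (n + s)‖ ^ 2) / 2 := by ring
    rw [h9]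
    rw [h3] at h6
    linarith
  set r : ℝ := 1 / (64 * (τ : ℝ) * κ) with hr
  have hτκ : (τ : ℝ) ≤ τ * κ := by nlinarith
  have hr0 : 0 ≤ r := by positivity
  have hαμ : α * μ = 1 / (16 * τ * κ) := by rw [hα, hκ]; field_simp
  have hrq : r ≤ α * μ := by
    rw [hαμ, hr]; gcongr; norm_num
  have hr4 : r ≤ 1 / (4 * τ) := by
    rw [hr]; apply one_div_le_one_div_of_le (by positivity); nlinarith
  have hτr : τ * r ≤ 1 / 64 := by
    rw [hr, show (τ : ℝ) * (1 / (64 * τ * κ)) = 1 / (64 * κ) by field_simp]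
    apply one_div_le_one_div_of_le (by norm_num); linarith
  have hr1 : r ≤ 1 := by nlinarith
  have hmain := aux_lyap (fun n => f (x (n + τ)) - f xstar) (fun n => ‖g n‖ ^ 2) τ hτ (α / 2) (α * μ) r
    (by positivity) hrq hr4 hr1 (fun n => sub_nonneg.2 (hmin _)) (fun n => sq_nonneg _) (K - τ) hstep
  simp only [Nat.sub_add_cancel hK.le, zero_add] at hmain
  have hW : ∑ s ∈ Finset.range τ, ((τ : ℝ) + s + 1) * ‖g s‖ ^ 2
      ≤ τ * (2 * τ * (4 * L ^ 2 * B ^ 2)) := by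
    refine (Finset.sum_le_card_nsmul _ _ (2 * τ * (4 * L ^ 2 * B ^ 2)) fun s hs => ?_).trans ?_
    · have hs := Finset.mem_range.1 hs
      have : (s : ℝ) + 1 ≤ τ := by exact_mod_cast hs
      exact mul_le_mul (by linarith) (hGτ s hs) (sq_nonneg _) (by positivity)
    · simp
  have hV : (f (x τ) - f xstar) + α / 2 / (128 * τ) *
      ∑ s ∈ Finset.range τ, ((τ : ℝ) + s + 1) * ‖g s‖ ^ 2 ≤ 3 * L * B ^ 2 := by
    have h1 : α / 2 / (128 * τ) * ∑ s ∈ Finset.range τ, ((τ : ℝ) + s + 1) * ‖g s‖ ^ 2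
        ≤ α / 2 / (128 * τ) * (τ * (2 * τ * (4 * L ^ 2 * B ^ 2))) := by gcongr
    have h2 : α / 2 / (128 * τ) * (τ * (2 * τ * (4 * L ^ 2 * B ^ 2)))
        = (α * L * τ) * (L * B ^ 2) / 32 := by field_simp <;> ring
    rw [h2, hαL] at h1
    have : 0 ≤ L * B ^ 2 := by positivity
    linarith
  have hbern : 1 / 2 ≤ (1 - r) ^ τ := by
    have := one_add_mul_le_pow (a := -r) (by linarith) τ
    rw [← sub_eq_add_neg] at this
    linarith
  have hρ : 0 ≤ (1 - r) ^ (K - τ) := pow_nonneg (sub_nonneg.2 hr1) _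
  have hsplit : (1 - r) ^ K = (1 - r) ^ (K - τ) * (1 - r) ^ τ := by
    rw [← pow_add, Nat.sub_add_cancel hK.le]
  calc f (x K) - f xstar ≤ (1 - r) ^ (K - τ) * (3 * L * B ^ 2) :=
        hmain.trans (mul_le_mul_of_nonneg_left hV hρ)
    _ = 6 * L * B ^ 2 * ((1 - r) ^ (K - τ) * (1 / 2)) := by ring
    _ ≤ 6 * L * B ^ 2 * (1 - r) ^ K := by rw [hsplit]; gcongr
end

section
/- (SAGA, strongly convex, high probability.) Suppose f is μ-strongly convex (μ > 0) with minimizer x* and κ := L/μ. Fix K ≥ 1, δ ∈ (0,1), let τ = ⌈(8N/3)·log(NK/δ)⌉, set α = 1/(16 L τ), and assume K > τ. Then, with probability at least 1 − δ over the i.i.d. uniform sampling, the SAGA iterates satisfy f(x_K) − f(x*) ≤ 6 L B² · (1 − 1/(64 τ κ))^K. -/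
open scoped RealInnerProductSpace

lemma saga_descent {E : Type*} [NormedAddCommGroup E] [InnerProductSpace ℝ E] [CompleteSpace E]
    (f : E → ℝ) (L : ℝ) (hd : Differentiable ℝ f)
    (hs : ∀ x y, ‖gradient f x - gradient f y‖ ≤ L * ‖x - y‖) (x y : E) :
    f y ≤ f x + ⟪gradient f x, y - x⟫ + L / 2 * ‖y - x‖ ^ 2 := by
  set φ : ℝ → ℝ := fun t => f (x + t • (y - x)) - t * ⟪gradient f x, y - x⟫
    - L / 2 * ‖y - x‖ ^ 2 * t ^ 2 with hφ
  have hder : ∀ t : ℝ, HasDerivAt φ (⟪gradient f (x + t • (y - x)), y - x⟫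
      - ⟪gradient f x, y - x⟫ - L / 2 * ‖y - x‖ ^ 2 * (2 * t)) t := by
    intro t
    have h1 : HasDerivAt (fun t : ℝ => x + t • (y - x)) (y - x) t := by
      simpa using ((hasDerivAt_id t).smul_const (y - x)).const_add x
    have h2 : HasDerivAt (fun t : ℝ => f (x + t • (y - x)))
        ⟪gradient f (x + t • (y - x)), y - x⟫ t := by
      have := ((hd (x + t • (y - x))).hasGradientAt.hasFDerivAt).comp_hasDerivAt t h1
      rw [InnerProductSpace.toDual_apply_apply] at this
      exact this
    have h3 : HasDerivAt (fun t : ℝ => t * ⟪gradient f x, y - x⟫) ⟪gradient f x, y - x⟫ t := by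
      simpa using (hasDerivAt_id t).mul_const ⟪gradient f x, y - x⟫
    have h4 : HasDerivAt (fun t : ℝ => L / 2 * ‖y - x‖ ^ 2 * t ^ 2)
        (L / 2 * ‖y - x‖ ^ 2 * (2 * t)) t := by
      simpa using (hasDerivAt_pow 2 t).const_mul (L / 2 * ‖y - x‖ ^ 2)
    exact (h2.sub h3).sub h4
  have hanti : AntitoneOn φ (Set.Icc 0 1) := by
    apply antitoneOn_of_deriv_nonpos (convex_Icc 0 1)
    · exact fun t _ => (hder t).continuousAt.continuousWithinAt
    · exact fun t _ => (hder t).differentiableAt.differentiableWithinAt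
    · intro t ht
      rw [interior_Icc] at ht
      rw [(hder t).deriv, ← inner_sub_left]
      have h1 := real_inner_le_norm (gradient f (x + t • (y - x)) - gradient f x) (y - x)
      have h2 := hs (x + t • (y - x)) x
      rw [add_sub_cancel_left, norm_smul, Real.norm_of_nonneg ht.1.le] at h2
      have h3 := mul_le_mul_of_nonneg_right h2 (norm_nonneg (y - x))
      nlinarith
  have := hanti (Set.left_mem_Icc.2 zero_le_one) (Set.right_mem_Icc.2 zero_le_one) zero_le_one
  simp only [hφ] at this
  rw [one_smul, zero_smul, add_zero, add_sub_cancel] at this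
  linarith

/-- weighted recursion -/
lemma saga_rec (K τ : ℕ) (ρ a b D : ℝ) (F G : ℕ → ℝ) (hρ0 : 0 < ρ) (hρ1 : ρ ≤ 1)
    (hG : ∀ k, 0 ≤ G k) (hb : 0 ≤ b) (hD : 0 ≤ D)
    (hab : b * τ ≤ a * ρ ^ τ)
    (hrec : ∀ k < K, F (k + 1) ≤ ρ * F k - a * G k + b * ∑ j ∈ Finset.Ico (k - τ) k, G j
      + if k < τ then D else 0) :
    F K ≤ ρ ^ K * (F 0 + τ * D * (ρ ^ τ)⁻¹) := by
  have hp1 : 1 ≤ ρ⁻¹ := (one_le_inv₀ hρ0).2 hρ1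
  have hp0 : 0 < ρ⁻¹ := by positivity
  have key : ∀ k ≤ K, F k * ρ⁻¹ ^ k ≤ F 0 + ∑ m ∈ Finset.range k, ρ⁻¹ ^ (m + 1) *
      (- a * G m + b * ∑ j ∈ Finset.Ico (m - τ) m, G j + if m < τ then D else 0) := by
    intro k
    induction k with
    | zero => intro _; simp
    | succ k ih =>
      intro hk
      have h1 := ih (by omega)
      have h2 := mul_le_mul_of_nonneg_right (hrec k (by omega)) (pow_nonneg hp0.le (k + 1))
      rw [Finset.sum_range_succ]
      have h3 : ρ * F k * ρ⁻¹ ^ (k + 1) = F k * ρ⁻¹ ^ k := by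
        rw [pow_succ]; field_simp
      nlinarith
  have hK := key K le_rfl
  -- bounds
  have hS : ∑ m ∈ Finset.range K, ρ⁻¹ ^ (m + 1) * ∑ j ∈ Finset.Ico (m - τ) m, G j
      ≤ ∑ j ∈ Finset.range K, ρ⁻¹ ^ (j + 1) * (τ * ρ⁻¹ ^ τ) * G j := by
    have e1 : ∀ m ∈ Finset.range K, ρ⁻¹ ^ (m + 1) * ∑ j ∈ Finset.Ico (m - τ) m, G j
        = ∑ j ∈ Finset.range K, if j ∈ Finset.Ico (m - τ) m then ρ⁻¹ ^ (m + 1) * G j else 0 := by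
      intro m hm
      rw [Finset.mul_sum, ← Finset.sum_filter]
      congr 1
      ext j
      simp at hm ⊢
      omega
    rw [Finset.sum_congr rfl e1, Finset.sum_comm]
    apply Finset.sum_le_sum
    intro j hj
    rw [← Finset.sum_filter]
    have hsub : (Finset.range K).filter (fun m => j ∈ Finset.Ico (m - τ) m) ⊆
        Finset.Ioc j (j + τ) := by
      intro m
      simp
      omega
    calc _ ≤ ∑ m ∈ (Finset.range K).filter (fun m => j ∈ Finset.Ico (m - τ) m),
              ρ⁻¹ ^ (j + 1) * ρ⁻¹ ^ τ * G j := by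
            apply Finset.sum_le_sum
            intro m hm
            have hm' := hsub hm
            rw [Finset.mem_Ioc] at hm'
            rw [← pow_add]
            exact mul_le_mul_of_nonneg_right (pow_le_pow_right₀ hp1 (by omega)) (hG j)
      _ ≤ ∑ m ∈ Finset.Ioc j (j + τ), ρ⁻¹ ^ (j + 1) * ρ⁻¹ ^ τ * G j := by
            apply Finset.sum_le_sum_of_subset_of_nonneg hsub
            intro m _ _
            have := hG j
            positivity
      _ = _ := by simp; ring
  have hDD : ∑ m ∈ Finset.range K, ρ⁻¹ ^ (m + 1) * (if m < τ then D else 0)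
      ≤ τ * D * (ρ ^ τ)⁻¹ := by
    calc _ ≤ ∑ m ∈ (Finset.range K).filter (fun m => m < τ), ρ⁻¹ ^ τ * D := by
            rw [Finset.sum_filter]
            apply Finset.sum_le_sum
            intro m hm
            split_ifs with h
            · exact mul_le_mul_of_nonneg_right (pow_le_pow_right₀ hp1 (by omega)) hD
            · simp
      _ ≤ ∑ m ∈ Finset.range τ, ρ⁻¹ ^ τ * D := by
            apply Finset.sum_le_sum_of_subset_of_nonneg
            · intro m; simp
            · intros; positivity
      _ = _ := by simp; ring
  have hab' : b * (τ * ρ⁻¹ ^ τ) ≤ a := by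
    have := mul_le_mul_of_nonneg_right hab (pow_nonneg hp0.le τ)
    rw [mul_assoc a, ← mul_pow, mul_inv_cancel₀ hρ0.ne'] at this
    linarith [this, one_pow (M := ℝ) τ, mul_assoc b (τ:ℝ) (ρ⁻¹ ^ τ), congrArg (a * ·) (one_pow (M := ℝ) τ)]
  have hcomb : ∑ m ∈ Finset.range K, ρ⁻¹ ^ (m + 1) *
      (- a * G m + b * ∑ j ∈ Finset.Ico (m - τ) m, G j + if m < τ then D else 0)
      ≤ τ * D * (ρ ^ τ)⁻¹ := by
    have e : ∑ m ∈ Finset.range K, ρ⁻¹ ^ (m + 1) *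
      (- a * G m + b * ∑ j ∈ Finset.Ico (m - τ) m, G j + if m < τ then D else 0)
      = ∑ m ∈ Finset.range K, ρ⁻¹ ^ (m + 1) * (-a * G m)
        + b * ∑ m ∈ Finset.range K, ρ⁻¹ ^ (m + 1) * ∑ j ∈ Finset.Ico (m - τ) m, G j
        + ∑ m ∈ Finset.range K, ρ⁻¹ ^ (m + 1) * (if m < τ then D else 0) := by
      rw [Finset.mul_sum, ← Finset.sum_add_distrib, ← Finset.sum_add_distrib]
      apply Finset.sum_congr rfl
      intros; ring
    rw [e]
    have h1 := mul_le_mul_of_nonneg_left hS hb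
    have h2 : ∑ m ∈ Finset.range K, ρ⁻¹ ^ (m + 1) * (-a * G m)
        + b * ∑ j ∈ Finset.range K, ρ⁻¹ ^ (j + 1) * (τ * ρ⁻¹ ^ τ) * G j ≤ 0 := by
      rw [Finset.mul_sum, ← Finset.sum_add_distrib]
      apply Finset.sum_nonpos
      intro m _
      have : ρ⁻¹ ^ (m + 1) * (-a * G m) + b * (ρ⁻¹ ^ (m + 1) * (τ * ρ⁻¹ ^ τ) * G m)
        = -((ρ⁻¹ ^ (m + 1) * G m) * (a - b * (τ * ρ⁻¹ ^ τ))) := by ring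
      rw [this]
      have h3 := mul_nonneg (mul_nonneg (pow_nonneg hp0.le (m+1)) (hG m)) (sub_nonneg.2 hab')
      linarith
    linarith
  have h5 := hK.trans (add_le_add_right hcomb (F 0))
  have h6 := mul_le_mul_of_nonneg_left h5 (pow_nonneg hρ0.le K)
  have h7 : ρ ^ K * (F K * ρ⁻¹ ^ K) = F K := by
    rw [mul_left_comm, ← mul_pow, mul_inv_cancel₀ hρ0.ne']; simp
  linarith

/-- union bound -/
lemma saga_good (N K τ : ℕ) (hN : 1 ≤ N) (hK1 : 1 ≤ K) (δ : ℝ) (hδ0 : 0 < δ) (hτ1 : 1 ≤ τ)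
    (hτ : (N : ℝ) * Real.log ((N : ℝ) * K / δ) ≤ τ) (P : (Fin K → Fin N) → Prop) [DecidablePred P]
    (hP : ∀ ω : Fin K → Fin N, (∀ k, k + τ ≤ K → ∀ i, ∃ m : Fin K, k ≤ m ∧ (m : ℕ) < k + τ ∧ ω m = i) → P ω) :
    1 - δ ≤ (Finset.univ.filter P).card / (N : ℝ) ^ K := by
  classical
  have hN0 : (0:ℝ) < N := by exact_mod_cast hN
  have hK0 : (0:ℝ) < K := by exact_mod_cast hK1
  set Bad : ℕ → Fin N → Finset (Fin K → Fin N) := fun k i =>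
    Fintype.piFinset (fun m : Fin K => if k ≤ m ∧ (m:ℕ) < k + τ then Finset.univ.erase i else Finset.univ)
  have hcard : ∀ k, k + τ ≤ K → ∀ i, ((Bad k i).card : ℝ) ≤ (N:ℝ) ^ K * (δ / (N * K)) := by
    intro k hk i
    have h1 : (Bad k i).card = ∏ m : Fin K, if k ≤ (m:ℕ) ∧ (m:ℕ) < k + τ then (N - 1) else N := by
      rw [Fintype.card_piFinset]
      apply Finset.prod_congr rfl
      intro m _
      split_ifs <;> simp
    have h2 : ((Bad k i).card : ℝ) = N ^ K * (1 - 1 / (N:ℝ)) ^ τ := by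
      rw [h1]
      push_cast
      rw [Fin.prod_univ_eq_prod_range (fun m => if k ≤ m ∧ m < k + τ then ((N - 1 : ℕ) : ℝ) else N) K]
      have : ∀ m ∈ Finset.range K, (if k ≤ m ∧ m < k + τ then ((N - 1 : ℕ) : ℝ) else N)
          = N * (if m ∈ Finset.Ico k (k + τ) then (1 - 1 / (N:ℝ)) else 1) := by
        intro m _
        simp only [Finset.mem_Ico]
        split_ifs
        · rw [Nat.cast_sub hN]; field_simp; simp
        · simp
      rw [Finset.prod_congr rfl this, Finset.prod_mul_distrib, Finset.prod_ite_mem,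
        Finset.prod_const, Finset.prod_const, Finset.card_range]
      have : Finset.range K ∩ Finset.Ico k (k + τ) = Finset.Ico k (k + τ) := by
        ext m; simp; omega
      rw [this]; simp
    rw [h2]
    apply mul_le_mul_of_nonneg_left _ (by positivity)
    have h3 : 1 - 1 / (N:ℝ) ≤ Real.exp (-(1 / N)) := by
      have := Real.add_one_le_exp (-(1 / (N:ℝ))); linarith
    have h4 : (0:ℝ) ≤ 1 - 1 / (N:ℝ) := by
      have : 1 / (N:ℝ) ≤ 1 := by rw [div_le_one hN0]; exact_mod_cast hN
      linarith
    calc (1 - 1 / (N:ℝ)) ^ τ ≤ Real.exp (-(1 / N)) ^ τ := pow_le_pow_left₀ h4 h3 τ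
      _ = Real.exp (-(τ / N)) := by rw [← Real.exp_nat_mul]; congr 1; ring
      _ ≤ Real.exp (-Real.log ((N : ℝ) * K / δ)) := by
          apply Real.exp_le_exp.2
          apply neg_le_neg
          rw [le_div_iff₀ hN0]; linarith
      _ = δ / (N * K) := by
          rw [Real.exp_neg, Real.exp_log (by positivity), inv_div]
  have hcov : (Finset.univ : Finset (Fin K → Fin N)) ⊆ Finset.univ.filter P ∪
      ((Finset.range (K - τ + 1)).filter (fun k => k + τ ≤ K) ×ˢ (Finset.univ : Finset (Fin N))).biUnion (fun p => Bad p.1 p.2) := by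
    intro ω _
    by_cases hω : P ω
    · simp [hω]
    · apply Finset.mem_union_right
      have := mt (hP ω) hω
      push Not at this
      obtain ⟨k, hk, i, hki⟩ := this
      rw [Finset.mem_biUnion]
      refine ⟨(k, i), ?_, ?_⟩
      · simp; omega
      · rw [Fintype.mem_piFinset]
        intro m
        split_ifs with hm
        · simpa using hki m hm.1 hm.2
        · simp
  have h1 := (Finset.card_le_card hcov).trans ((Finset.card_union_le _ _).trans
    (Nat.add_le_add_left Finset.card_biUnion_le _))
  have h2 : (N:ℝ) ^ K ≤ (Finset.univ.filter P).card + ∑ p ∈ (Finset.range (K - τ + 1)).filter (fun k => k + τ ≤ K) ×ˢ (Finset.univ : Finset (Fin N)), ((Bad p.1 p.2).card : ℝ) := by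
    have : (Finset.univ : Finset (Fin K → Fin N)).card = N ^ K := by simp
    rw [this] at h1
    exact_mod_cast h1
  have h3 : ∑ p ∈ (Finset.range (K - τ + 1)).filter (fun k => k + τ ≤ K) ×ˢ (Finset.univ : Finset (Fin N)), ((Bad p.1 p.2).card : ℝ) ≤ (N:ℝ) ^ K * δ := by
    calc _ ≤ ∑ p ∈ (Finset.range (K - τ + 1)).filter (fun k => k + τ ≤ K) ×ˢ (Finset.univ : Finset (Fin N)), (N:ℝ) ^ K * (δ / (N * K)) := by
            apply Finset.sum_le_sum
            intro p hp
            simp only [Finset.mem_product, Finset.mem_filter] at hp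
            exact hcard p.1 hp.1.2 p.2
      _ ≤ ∑ p ∈ Finset.range K ×ˢ (Finset.univ : Finset (Fin N)), (N:ℝ) ^ K * (δ / (N * K)) := by
            apply Finset.sum_le_sum_of_subset_of_nonneg
            · intro p; simp; omega
            · intros; positivity
      _ = _ := by
            simp; field_simp
  rw [le_div_iff₀ (by positivity)]
  linarith

set_option maxHeartbeats 2000000 in
lemma saga_det {E : Type*} [NormedAddCommGroup E] [InnerProductSpace ℝ E] [CompleteSpace E]
    (N : ℕ) (hN : 1 ≤ N)
    (L μ : ℝ) (hL : 0 < L) (hμ : 0 < μ) (hμL : μ ≤ L)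
    (fi : Fin N → E → ℝ)
    (hsmooth : ∀ i x y, ‖gradient (fi i) x - gradient (fi i) y‖ ≤ L * ‖x - y‖)
    (f : E → ℝ)
    (hgf : ∀ z, gradient f z = (N : ℝ)⁻¹ • ∑ i, gradient (fi i) z)
    (hdesc : ∀ x y, f y ≤ f x + ⟪gradient f x, y - x⟫ + L / 2 * ‖y - x‖ ^ 2)
    (hsc : ∀ y z, f y + ⟪gradient f y, z - y⟫ + μ / 2 * ‖z - y‖ ^ 2 ≤ f z)
    (xstar : E) (hgs : gradient f xstar = 0)
    (xistar : Fin N → E) (hgi : ∀ i, gradient (fi i) (xistar i) = 0)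
    (B : ℝ) (hB0 : ‖xstar‖ ≤ B) (hBi : ∀ i, ‖xistar i‖ ≤ B)
    (K τ : ℕ) (hτ1 : 1 ≤ τ)
    (α : ℝ) (hα : α = 1 / (16 * L * τ))
    (ω : Fin K → Fin N) (x g : ℕ → E) (h : Fin N → ℕ → E)
    (hx0 : x 0 = 0) (hh0 : ∀ i, h i 0 = 0)
    (hhrec : ∀ (i : Fin N) (k : ℕ) (hk : k < K),
      h i (k + 1) = if ω ⟨k, hk⟩ = i then gradient (fi i) (x k) else h i k)
    (hg : ∀ (k : ℕ) (hk : k < K),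
      g k = (N : ℝ)⁻¹ • (∑ i, h i k)
        + (gradient (fi (ω ⟨k, hk⟩)) (x k) - h (ω ⟨k, hk⟩) k))
    (hxrec : ∀ (k : ℕ), k < K → x (k + 1) = x k - α • g k)
    (hgood : ∀ k, k + τ ≤ K → ∀ i, ∃ m : Fin K, k ≤ m ∧ (m : ℕ) < k + τ ∧ ω m = i) :
    f (x K) - f xstar ≤ 6 * L * B ^ 2 * (1 - 1 / (64 * (τ : ℝ) * (L / μ))) ^ K := by
  have hN0 : (0:ℝ) < N := by exact_mod_cast hN
  have hτ0 : (1:ℝ) ≤ τ := by exact_mod_cast hτ1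
  have hα0 : 0 < α := by rw [hα]; positivity
  have hαL : L * α = 1 / (16 * τ) := by rw [hα]; field_simp
  have hαL1 : L * α ≤ 1 / 16 := by
    rw [hαL]; apply one_div_le_one_div_of_le <;> linarith
  have hBnn : 0 ≤ B := (norm_nonneg _).trans hB0
  set W : ℕ → ℝ := fun k => ∑ m ∈ Finset.Ico (k - τ) k, ‖g m‖ with hW
  set S : ℕ → ℝ := fun k => ∑ m ∈ Finset.Ico (k - τ) k, ‖g m‖ ^ 2 with hS
  set R : ℕ → ℝ := fun k => (if k < τ then B else 0) + α * W k with hR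
  have hW0 : ∀ k, 0 ≤ W k := fun k => Finset.sum_nonneg fun _ _ => norm_nonneg _
  -- movement
  have hmove : ∀ j k, j ≤ k → k ≤ K → ‖x k - x j‖ ≤ α * ∑ m ∈ Finset.Ico j k, ‖g m‖ := by
    intro j k hjk
    induction k, hjk using Nat.le_induction with
    | base => intro _; simp
    | succ k hjk ih =>
      intro hk
      rw [Finset.sum_Ico_succ_top hjk, hxrec k (by omega), mul_add]
      calc ‖x k - α • g k - x j‖ = ‖(x k - x j) - α • g k‖ := by congr 1; abel
        _ ≤ ‖x k - x j‖ + ‖α • g k‖ := norm_sub_le _ _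
        _ ≤ _ := by
          rw [norm_smul, Real.norm_of_nonneg hα0.le]
          linarith [ih (by omega)]
  have hmove' : ∀ j k, k - τ ≤ j → j ≤ k → k ≤ K → ‖x k - x j‖ ≤ α * W k := by
    intro j k h1 h2 h3
    refine (hmove j k h2 h3).trans (mul_le_mul_of_nonneg_left ?_ hα0.le)
    apply Finset.sum_le_sum_of_subset_of_nonneg
    · exact Finset.Ico_subset_Ico_left h1
    · intros; positivity
  -- memory
  have hmem : ∀ i k, k ≤ K →
      (∃ j < k, h i k = gradient (fi i) (x j) ∧ ∀ m : Fin K, j < m → (m:ℕ) < k → ω m ≠ i) ∨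
      (h i k = 0 ∧ ∀ m : Fin K, (m:ℕ) < k → ω m ≠ i) := by
    intro i k
    induction k with
    | zero => intro _; right; simp [hh0]
    | succ k ih =>
      intro hk
      rw [hhrec i k (by omega)]
      by_cases hi : ω ⟨k, by omega⟩ = i
      · left
        refine ⟨k, by omega, by simp [hi], ?_⟩
        intro m h1 h2; omega
      · rw [if_neg hi]
        have aux : ∀ m : Fin K, (m:ℕ) < k + 1 → (m:ℕ) < k ∨ ω m ≠ i := by
          intro m hm
          rcases Nat.lt_succ_iff_lt_or_eq.1 hm with h | h
          · exact Or.inl h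
          · right
            have : m = ⟨k, by omega⟩ := Fin.ext h
            rw [this]; exact hi
        rcases ih (by omega) with ⟨j, hj, h1, h2⟩ | ⟨h1, h2⟩
        · left
          refine ⟨j, by omega, h1, ?_⟩
          intro m hm1 hm2
          rcases aux m hm2 with h | h
          · exact h2 m hm1 h
          · exact h
        · right
          refine ⟨h1, ?_⟩
          intro m hm2
          rcases aux m hm2 with h | h
          · exact h2 m h
          · exact h
  have hstale : ∀ i k, k ≤ K → ‖h i k - gradient (fi i) (x k)‖ ≤ L * R k := by
    intro i k hk
    have hRW : α * W k ≤ R k := by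
      simp only [hR]; split_ifs <;> linarith
    have hRec : ∀ j, k - τ ≤ j → j ≤ k → ‖gradient (fi i) (x j) - gradient (fi i) (x k)‖ ≤ L * R k := by
      intro j h1 h2
      refine (hsmooth i _ _).trans (mul_le_mul_of_nonneg_left ?_ hL.le)
      rw [norm_sub_rev]
      exact (hmove' j k h1 h2 hk).trans hRW
    by_cases hkτ : k < τ
    · rcases hmem i k hk with ⟨j, hj, h1, -⟩ | ⟨h1, -⟩
      · rw [h1]; exact hRec j (by omega) hj.le
      · rw [h1, ← hgi i]
        refine (hsmooth i _ _).trans (mul_le_mul_of_nonneg_left ?_ hL.le)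
        have h3 := hmove' 0 k (by omega) (by omega) hk
        rw [hx0, sub_zero] at h3
        simp only [hR, if_pos hkτ]
        exact (norm_sub_le _ _).trans (add_le_add (hBi i) h3)
    · obtain ⟨m, hm1, hm2, hm3⟩ := hgood (k - τ) (by omega) i
      rcases hmem i k hk with ⟨j, hj, h1, h2⟩ | ⟨-, h2⟩
      · rw [h1]
        apply hRec j _ hj.le
        by_contra hc
        exact h2 m (by omega) (by omega) hm3
      · exact absurd hm3 (h2 m (by omega))
  have herr : ∀ k, k < K → ‖g k - gradient f (x k)‖ ≤ 2 * (L * R k) := by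
    intro k hk
    have e : g k - gradient f (x k) = (N:ℝ)⁻¹ • ∑ i, (h i k - gradient (fi i) (x k))
        + (gradient (fi (ω ⟨k, hk⟩)) (x k) - h (ω ⟨k, hk⟩) k) := by
      rw [hg k hk, hgf, Finset.sum_sub_distrib, smul_sub]; abel
    rw [e]
    have h1 : ‖(N:ℝ)⁻¹ • ∑ i, (h i k - gradient (fi i) (x k))‖ ≤ L * R k := by
      rw [norm_smul, Real.norm_of_nonneg (by positivity), inv_mul_le_iff₀ hN0]
      refine (norm_sum_le _ _).trans ?_
      refine (Finset.sum_le_sum fun i _ => hstale i k hk.le).trans ?_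
      simp
    have h2 := hstale (ω ⟨k, hk⟩) k hk.le
    rw [norm_sub_rev] at h2
    linarith [norm_add_le ((N:ℝ)⁻¹ • ∑ i, (h i k - gradient (fi i) (x k)))
      (gradient (fi (ω ⟨k, hk⟩)) (x k) - h (ω ⟨k, hk⟩) k)]
  have hWS : ∀ k, W k ^ 2 ≤ τ * S k := by
    intro k
    refine (sq_sum_le_card_mul_sum_sq).trans ?_
    apply mul_le_mul_of_nonneg_right
    · rw [Nat.card_Ico]; exact_mod_cast (by omega : k - (k - τ) ≤ τ)
    · exact Finset.sum_nonneg fun _ _ => by positivity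
  have herr2 : ∀ k, k < K → ‖g k - gradient f (x k)‖ ^ 2 ≤
      (if k < τ then 8 * L ^ 2 * B ^ 2 else 0) + 1 / (32 * τ) * S k := by
    intro k hk
    have hR0 : 0 ≤ R k := by
      have := mul_nonneg hα0.le (hW0 k)
      simp only [hR]; split_ifs <;> linarith
    have h1 := pow_le_pow_left₀ (norm_nonneg _) (herr k hk) 2
    have h2 : R k ^ 2 ≤ (if k < τ then 2 * B ^ 2 else 0) + 2 * (α ^ 2 * W k ^ 2) := by
      simp only [hR]; split_ifs
      · nlinarith [sq_nonneg (B - α * W k)]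
      · nlinarith [sq_nonneg (α * W k)]
    have h3 : 4 * L ^ 2 * (2 * (α ^ 2 * W k ^ 2)) ≤ 1 / (32 * τ) * S k := by
      have e1 : 4 * L ^ 2 * (2 * (α ^ 2 * W k ^ 2)) = 8 * (L * α) ^ 2 * W k ^ 2 := by ring
      rw [e1, hαL]
      have := mul_le_mul_of_nonneg_left (hWS k) (by positivity : (0:ℝ) ≤ 8 * (1 / (16 * (τ:ℝ))) ^ 2)
      refine this.trans (le_of_eq ?_)
      field_simp; ring_nf
    have h4 := mul_le_mul_of_nonneg_left h2 (by positivity : (0:ℝ) ≤ 4 * L ^ 2)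
    split_ifs at * <;> nlinarith
  have hPL : ∀ y, 2 * μ * (f y - f xstar) ≤ ‖gradient f y‖ ^ 2 := by
    intro y
    have h1 := hsc y xstar
    have h2 : 0 ≤ ‖gradient f y + μ • (xstar - y)‖ ^ 2 := by positivity
    rw [norm_add_sq_real, norm_smul, Real.norm_of_nonneg hμ.le, inner_smul_right] at h2
    nlinarith
  have hgap : ∀ y, 0 ≤ f y - f xstar := by
    intro y
    have h1 := hsc xstar y
    rw [hgs, inner_zero_left] at h1
    have : 0 ≤ μ / 2 * ‖y - xstar‖ ^ 2 := by positivity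
    linarith
  set ρ : ℝ := 1 - 1 / (64 * (τ : ℝ) * (L / μ)) with hρ
  have hρα : ρ = 1 - α * μ / 4 := by rw [hρ, hα]; field_simp; ring_nf
  have hαμ : α * μ ≤ 1 / (16 * τ) := by rw [← hαL]; nlinarith
  have hαμ0 : 0 < α * μ := by positivity
  have hαμ1 : α * μ ≤ 1 / 16 := by nlinarith
  have hρ0 : 0 < ρ := by rw [hρα]; linarith
  have hρ1 : ρ ≤ 1 := by rw [hρα]; linarith
  have hρτ : 63 / 64 ≤ ρ ^ τ := by
    have h1 := one_add_mul_le_pow (a := - (α * μ / 4)) (by linarith) τ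
    have h2 : ρ = 1 + -(α * μ / 4) := by rw [hρα]; ring
    rw [h2]
    refine le_trans ?_ h1
    have h3 := mul_le_mul_of_nonneg_left hαμ (by linarith : (0:ℝ) ≤ τ)
    have h4 : (τ:ℝ) * (1 / (16 * τ)) = 1 / 16 := by field_simp
    nlinarith
  have hmain := saga_rec K τ ρ (15 / 32 * α) (α / (64 * τ)) (4 * α * L ^ 2 * B ^ 2)
    (fun k => f (x k) - f xstar) (fun k => ‖g k‖ ^ 2) hρ0 hρ1 (fun k => by positivity)
    (by positivity) (by positivity) (by
      have : α / (64 * τ) * τ = α / 64 := by field_simp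
      rw [this]; nlinarith) (by
      intro k hk
      have h1 := hdesc (x k) (x (k + 1))
      have e1 : x (k + 1) - x k = -(α • g k) := by rw [hxrec k hk]; abel
      rw [e1, norm_neg, norm_smul, Real.norm_of_nonneg hα0.le, inner_neg_right,
        inner_smul_right] at h1
      have h2 := herr2 k hk
      have h3 : ‖g k - gradient f (x k)‖ ^ 2 = ‖g k‖ ^ 2 - 2 * ⟪gradient f (x k), g k⟫
          + ‖gradient f (x k)‖ ^ 2 := by rw [norm_sub_sq_real, real_inner_comm]
      have h4 := hPL (x k)
      have h5 := mul_le_mul_of_nonneg_left h2 (by positivity : 0 ≤ α / 2)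
      have h6 := mul_le_mul_of_nonneg_left h4 (by positivity : 0 ≤ α / 2)
      have h7 : α * (L * α) * ‖g k‖ ^ 2 ≤ α * (1 / 16) * ‖g k‖ ^ 2 := by gcongr
      have h8 : α / (64 * τ) * S k = α / 2 * (1 / (32 * τ) * S k) := by field_simp; ring_nf
      have h9 := mul_nonneg hαμ0.le (hgap (x k))
      change _ ≤ ρ * (f (x k) - f xstar) - 15 / 32 * α * ‖g k‖ ^ 2 + α / (64 * τ) * S k + _
      rw [h8, hρα]
      rw [h3] at h5
      split_ifs at * <;> nlinarith)
  beta_reduce at hmain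
  have hF0 : f (x 0) - f xstar ≤ L / 2 * B ^ 2 := by
    have h1 := hdesc xstar (x 0)
    rw [hgs, inner_zero_left, hx0, zero_sub, norm_neg] at h1
    have := pow_le_pow_left₀ (norm_nonneg _) hB0 2
    rw [hx0]; nlinarith
  have hDt : τ * (4 * α * L ^ 2 * B ^ 2) = L * B ^ 2 / 4 := by
    rw [hα]; field_simp; ring_nf
  rw [hDt] at hmain
  have hinv : (ρ ^ τ)⁻¹ ≤ 2 := by
    rw [inv_le_comm₀ (by positivity) (by norm_num)]; linarith
  have hLB : 0 ≤ L * B ^ 2 := by positivity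
  have h1 : f (x 0) - f xstar + L * B ^ 2 / 4 * (ρ ^ τ)⁻¹ ≤ 6 * L * B ^ 2 := by
    nlinarith [mul_le_mul_of_nonneg_left hinv (by positivity : 0 ≤ L * B ^ 2 / 4)]
  have h2 := mul_le_mul_of_nonneg_left h1 (pow_nonneg hρ0.le K)
  linarith

/- STATEMENT 15 (SAGA, strongly convex case, high probability).
The i.i.d. uniform sampling sequence is modeled as `ω : Fin K → Fin N`, uniformly
distributed, so the probability of an event is its cardinality divided by `N ^ K`.
The trajectory `x ω`, direction `g ω`, and memory `h ω` are driven by the sample `ω`. -/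
open Classical in
theorem saga_strongly_convex_high_prob (d N : ℕ) (hd : 1 ≤ d) (hN : 1 ≤ N)
    (L μ : ℝ) (hL : 0 < L) (hμ : 0 < μ)
    (fi : Fin N → EuclideanSpace ℝ (Fin d) → ℝ)
    (hdiff : ∀ i, Differentiable ℝ (fi i))
    (hsmooth : ∀ i x y, ‖gradient (fi i) x - gradient (fi i) y‖ ≤ L * ‖x - y‖)
    (f : EuclideanSpace ℝ (Fin d) → ℝ)
    (hf : ∀ z, f z = (∑ i, fi i z) / N)
    (hsc : ∀ y z, f y + ⟪gradient f y, z - y⟫ + μ / 2 * ‖z - y‖ ^ 2 ≤ f z)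
    (xstar : EuclideanSpace ℝ (Fin d)) (hmin : ∀ y, f xstar ≤ f y)
    (xistar : Fin N → EuclideanSpace ℝ (Fin d))
    (hxi : ∀ i y, fi i (xistar i) ≤ fi i y)
    (B : ℝ) (hB : B = max ‖xstar‖ (⨆ i, ‖xistar i‖))
    (κ : ℝ) (hκ : κ = L / μ)
    (K : ℕ) (hK1 : 1 ≤ K) (δ : ℝ) (hδ0 : 0 < δ) (hδ1 : δ < 1)
    (τ : ℕ) (hτ : τ = ⌈(8 * (N : ℝ) / 3) * Real.log ((N : ℝ) * K / δ)⌉₊)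
    (α : ℝ) (hα : α = 1 / (16 * L * τ))
    (hKτ : τ < K)
    (x g : (Fin K → Fin N) → ℕ → EuclideanSpace ℝ (Fin d))
    (h : (Fin K → Fin N) → Fin N → ℕ → EuclideanSpace ℝ (Fin d))
    (hx0 : ∀ ω, x ω 0 = 0)
    (hh0 : ∀ ω i, h ω i 0 = 0)
    (hhrec : ∀ ω (i : Fin N) (k : ℕ) (hk : k < K),
      h ω i (k + 1) = if ω ⟨k, hk⟩ = i then gradient (fi i) (x ω k) else h ω i k)
    (hg : ∀ ω (k : ℕ) (hk : k < K),
      g ω k = (N : ℝ)⁻¹ • (∑ i, h ω i k)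
        + (gradient (fi (ω ⟨k, hk⟩)) (x ω k) - h ω (ω ⟨k, hk⟩) k))
    (hxrec : ∀ ω (k : ℕ), k < K → x ω (k + 1) = x ω k - α • g ω k) :
    1 - δ ≤
      (Finset.univ.filter (fun ω : Fin K → Fin N =>
          f (x ω K) - f xstar ≤
            6 * L * B ^ 2 * (1 - 1 / (64 * (τ : ℝ) * κ)) ^ K)).card / (N : ℝ) ^ K := by
  have hN0 : (0:ℝ) < N := by exact_mod_cast hN
  have hK0 : (0:ℝ) < K := by exact_mod_cast hK1
  have hlog : 0 < Real.log ((N : ℝ) * K / δ) := by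
    apply Real.log_pos
    rw [one_lt_div hδ0]
    have h1 : (1:ℝ) ≤ N := by exact_mod_cast hN
    have h2 : (1:ℝ) ≤ K := by exact_mod_cast hK1
    nlinarith
  have hτle : (8 * (N : ℝ) / 3) * Real.log ((N : ℝ) * K / δ) ≤ τ := by
    rw [hτ]; exact Nat.le_ceil _
  have hNlog : 0 < (N:ℝ) * Real.log ((N : ℝ) * K / δ) := by positivity
  have hτN : (N : ℝ) * Real.log ((N : ℝ) * K / δ) ≤ τ := by linarith
  have hτ1 : 1 ≤ τ := by
    have : (0:ℝ) < τ := by linarith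
    exact_mod_cast this
  have hfeq : f = fun z => (N:ℝ)⁻¹ * ∑ i, fi i z := by
    funext z; rw [hf z]; ring
  have hgrad : ∀ z, HasGradientAt f ((N : ℝ)⁻¹ • ∑ i, gradient (fi i) z) z := by
    intro z
    rw [hasGradientAt_iff_hasFDerivAt, hfeq]
    have h1 : HasFDerivAt (fun z => ∑ i, fi i z)
        (∑ i, (InnerProductSpace.toDual ℝ _) (gradient (fi i) z)) z :=
      HasFDerivAt.fun_sum fun i _ => (hdiff i z).hasGradientAt.hasFDerivAt
    have h2 := h1.const_mul (N:ℝ)⁻¹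
    have e : (InnerProductSpace.toDual ℝ _) ((N : ℝ)⁻¹ • ∑ i, gradient (fi i) z)
        = (N : ℝ)⁻¹ • ∑ i, (InnerProductSpace.toDual ℝ _) (gradient (fi i) z) := by
      rw [map_smulₛₗ, map_sum]
      rfl
    rw [e]
    exact h2
  have hgf : ∀ z, gradient f z = (N : ℝ)⁻¹ • ∑ i, gradient (fi i) z := fun z => (hgrad z).gradient
  have hfd : Differentiable ℝ f := fun z => (hgrad z).differentiableAt
  have hfs : ∀ x y, ‖gradient f x - gradient f y‖ ≤ L * ‖x - y‖ := by
    intro x y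
    rw [hgf, hgf, ← smul_sub, ← Finset.sum_sub_distrib, norm_smul,
      Real.norm_of_nonneg (by positivity), inv_mul_le_iff₀ hN0]
    refine (norm_sum_le _ _).trans ?_
    refine (Finset.sum_le_sum fun i _ => hsmooth i x y).trans ?_
    simp
  have hdesc := saga_descent f L hfd hfs
  have hcrit : ∀ (F : EuclideanSpace ℝ (Fin d) → ℝ) z, (∀ y, F z ≤ F y) → gradient F z = 0 := by
    intro F z hz
    have : IsLocalMin F z := Filter.Eventually.of_forall hz
    rw [gradient, this.fderiv_eq_zero, map_zero]
  have hgs := hcrit f xstar hmin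
  have hμL : μ ≤ L := by
    have : Nonempty (Fin d) := ⟨⟨0, hd⟩⟩
    obtain ⟨v, hv⟩ := exists_ne (0 : EuclideanSpace ℝ (Fin d))
    have h1 := hsc xstar (xstar + v)
    have h2 := hdesc xstar (xstar + v)
    rw [hgs, inner_zero_left, add_sub_cancel_left] at h1 h2
    have h3 : 0 < ‖v‖ ^ 2 := by have := norm_pos_iff.2 hv; positivity
    by_contra hc
    push Not at hc
    nlinarith
  apply saga_good N K τ hN hK1 δ hδ0 hτ1 hτN
  intro ω hω
  rw [hκ]
  refine saga_det N hN L μ hL hμ hμL fi hsmooth f hgf hdesc hsc xstar hgs xistar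
    (fun i => hcrit _ _ (hxi i)) B ?_ ?_ K τ hτ1 α hα ω (x ω) (g ω) (h ω) (hx0 ω) (hh0 ω)
    (hhrec ω) (hg ω) (hxrec ω) hω
  · rw [hB]; exact le_max_left _ _
  · intro i
    rw [hB]
    exact (le_ciSup (f := fun i => ‖xistar i‖) (Set.finite_range _).bddAbove i).trans (le_max_right _ _)
end
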